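/- arXiv:2404.01772 — 3 statements merged into one kernel-verified Lean document; each statement's English description precedes it below -/
import Mathlib

section
/- Let V and W be complex vector spaces, let p₀, p₁ be seminorms on V and q₀, q₁ be seminorms on W, and let T : V → W be a linear map for which there exist constants C₀, C₁ > 0 with q₀(T v) ≤ C₀ p₀(v) and q₁(T v) ≤ C₁ p₁(v) for all v ∈ V. Then for every θ with 0 < θ < 1 and every v ∈ V one has (∫₀^∞ t^{-2θ} K₂^{q}(t; T v)² dt/t)^{1/2} ≤ C₀^{1-θ} C₁^{θ} (∫₀^∞ t^{-2θ} K₂^{p}(t; v)² dt/t)^{1/2}, where the integrals are taken in the extended nonnegative reals. -/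
open MeasureTheory Set
open scoped ENNReal

/-- The quadratic K-functional associated to a pair of seminorms `p₀, p₁` on a complex
vector space: `K₂(t; v) = inf { √(p₀(v₀)² + t² p₁(v₁)²) : v = v₀ + v₁ }`. -/
noncomputable def K2 {V : Type*} [AddCommGroup V] [Module ℂ V]
    (p₀ p₁ : Seminorm ℂ V) (t : ℝ) (v : V) : ℝ :=
  sInf {r : ℝ | ∃ v₀ v₁ : V, v = v₀ + v₁ ∧
    r = Real.sqrt ((p₀ v₀) ^ 2 + t ^ 2 * (p₁ v₁) ^ 2)}

/-- The interpolation quasi-norm `(∫₀^∞ t^{-2θ} K₂(t; v)² dt/t)^{1/2}`, as an extended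
nonnegative real. -/
noncomputable def interpNorm {V : Type*} [AddCommGroup V] [Module ℂ V]
    (p₀ p₁ : Seminorm ℂ V) (θ : ℝ) (v : V) : ℝ≥0∞ :=
  (∫⁻ t in Ioi (0 : ℝ),
    ENNReal.ofReal (t ^ (-(2 * θ)) * (K2 p₀ p₁ t v) ^ 2 / t)) ^ ((1 : ℝ) / 2)

theorem K2_nonneg' {V : Type*} [AddCommGroup V] [Module ℂ V]
    (p₀ p₁ : Seminorm ℂ V) (t : ℝ) (v : V) : 0 ≤ K2 p₀ p₁ t v := by
  apply Real.sInf_nonneg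
  rintro r ⟨v₀, v₁, -, rfl⟩
  exact Real.sqrt_nonneg _

theorem K2_map_le {V W : Type*} [AddCommGroup V] [Module ℂ V] [AddCommGroup W] [Module ℂ W]
    (p₀ p₁ : Seminorm ℂ V) (q₀ q₁ : Seminorm ℂ W) (T : V →ₗ[ℂ] W)
    (C₀ C₁ : ℝ) (hC₀ : 0 < C₀) (hC₁ : 0 < C₁)
    (h₀ : ∀ v : V, q₀ (T v) ≤ C₀ * p₀ v) (h₁ : ∀ v : V, q₁ (T v) ≤ C₁ * p₁ v)
    (t : ℝ) (v : V) :
    K2 q₀ q₁ t (T v) ≤ C₀ * K2 p₀ p₁ (C₁ / C₀ * t) v := by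
  rw [mul_comm, ← div_le_iff₀ hC₀]
  apply le_csInf
  · exact ⟨_, v, 0, by simp, rfl⟩
  rintro r ⟨v₀, v₁, hv, rfl⟩
  rw [div_le_iff₀ hC₀]
  have hb : K2 q₀ q₁ t (T v) ≤ Real.sqrt ((q₀ (T v₀)) ^ 2 + t ^ 2 * (q₁ (T v₁)) ^ 2) := by
    apply csInf_le
    · refine ⟨0, ?_⟩
      rintro r ⟨w₀, w₁, -, rfl⟩
      exact Real.sqrt_nonneg _
    · exact ⟨T v₀, T v₁, by rw [hv, map_add], rfl⟩
  refine hb.trans ?_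
  apply Real.sqrt_le_iff.2
  refine ⟨by positivity, ?_⟩
  rw [mul_pow, Real.sq_sqrt (by positivity)]
  have e0 : (q₀ (T v₀)) ^ 2 ≤ (C₀ * p₀ v₀) ^ 2 := pow_le_pow_left₀ (apply_nonneg _ _) (h₀ v₀) 2
  have e1 : (q₁ (T v₁)) ^ 2 ≤ (C₁ * p₁ v₁) ^ 2 := pow_le_pow_left₀ (apply_nonneg _ _) (h₁ v₁) 2
  calc _ ≤ (C₀ * p₀ v₀) ^ 2 + t ^ 2 * (C₁ * p₁ v₁) ^ 2 := by gcongr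
    _ = _ := by field_simp

theorem interpolation_quasinorm_bound
    {V W : Type*} [AddCommGroup V] [Module ℂ V] [AddCommGroup W] [Module ℂ W]
    (p₀ p₁ : Seminorm ℂ V) (q₀ q₁ : Seminorm ℂ W) (T : V →ₗ[ℂ] W)
    (C₀ C₁ : ℝ) (hC₀ : 0 < C₀) (hC₁ : 0 < C₁)
    (h₀ : ∀ v : V, q₀ (T v) ≤ C₀ * p₀ v) (h₁ : ∀ v : V, q₁ (T v) ≤ C₁ * p₁ v)
    (θ : ℝ) (hθ₀ : 0 < θ) (hθ₁ : θ < 1) (v : V) :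
    interpNorm q₀ q₁ θ (T v)
      ≤ ENNReal.ofReal (C₀ ^ (1 - θ) * C₁ ^ θ) * interpNorm p₀ p₁ θ v := by
  set a : ℝ := C₁ / C₀ with ha
  have ha0 : 0 < a := by positivity
  set c : ℝ := C₀ ^ (1 - θ) * C₁ ^ θ with hc
  have hc0 : 0 < c := by positivity
  have hca : c = C₀ * a ^ θ := by
    rw [hc, ha, Real.div_rpow hC₁.le hC₀.le, Real.rpow_sub hC₀, Real.rpow_one]
    ring
  have haθ : a ^ (-(2 * θ)) * (a ^ θ) ^ 2 = 1 := by
    rw [← Real.rpow_natCast (a ^ θ) 2, ← Real.rpow_mul ha0.le, ← Real.rpow_add ha0]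
    rw [show -(2 * θ) + θ * ((2 : ℕ) : ℝ) = 0 by push_cast; ring, Real.rpow_zero]
  have himg : (fun t : ℝ => a * t) '' Ioi 0 = Ioi 0 := by
    ext x
    constructor
    · rintro ⟨t, ht, rfl⟩
      exact mul_pos ha0 ht
    · intro hx
      exact ⟨x / a, div_pos hx ha0, by field_simp⟩
  have hcv := lintegral_image_eq_lintegral_abs_deriv_mul (s := Ioi (0 : ℝ))
    (f := fun t : ℝ => a * t) (f' := fun _ => a) measurableSet_Ioi
    (fun x _ => by simpa using ((hasDerivAt_id x).const_mul a).hasDerivWithinAt)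
    (fun x _ y _ h => mul_left_cancel₀ ha0.ne' h)
    (fun t => ENNReal.ofReal (t ^ (-(2 * θ)) * (K2 p₀ p₁ t v) ^ 2 / t))
  rw [himg] at hcv
  have key : (∫⁻ t in Ioi (0 : ℝ),
      ENNReal.ofReal (t ^ (-(2 * θ)) * (K2 q₀ q₁ t (T v)) ^ 2 / t)) ≤
      ENNReal.ofReal c ^ (2 : ℝ) * ∫⁻ t in Ioi (0 : ℝ),
      ENNReal.ofReal (t ^ (-(2 * θ)) * (K2 p₀ p₁ t v) ^ 2 / t) := by
    rw [hcv, ← lintegral_const_mul' _ _ (by simp)]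
    apply setLIntegral_mono' measurableSet_Ioi
    intro t ht
    have ht : 0 < t := ht
    rw [ENNReal.ofReal_rpow_of_pos hc0, ← ENNReal.ofReal_mul (abs_nonneg _),
      ← ENNReal.ofReal_mul (by positivity)]
    apply ENNReal.ofReal_le_ofReal
    have hK := pow_le_pow_left₀ (K2_nonneg' q₀ q₁ t (T v))
      (K2_map_le p₀ p₁ q₀ q₁ T C₀ C₁ hC₀ hC₁ h₀ h₁ t v) 2
    rw [← ha] at hK
    rw [abs_of_pos ha0, Real.mul_rpow ha0.le ht.le, Real.rpow_two, hca]
    calc _ ≤ t ^ (-(2 * θ)) * (C₀ * K2 p₀ p₁ (a * t) v) ^ 2 / t := by gcongr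
      _ = (a ^ (-(2 * θ)) * (a ^ θ) ^ 2) *
          (t ^ (-(2 * θ)) * (C₀ * K2 p₀ p₁ (a * t) v) ^ 2 / t) := by rw [haθ, one_mul]
      _ = _ := by
        generalize a ^ (-(2 * θ)) = x
        generalize a ^ θ = y
        generalize t ^ (-(2 * θ)) = z
        generalize K2 p₀ p₁ (a * t) v = k
        clear_value a
        field_simp
  unfold interpNorm
  calc _ ≤ _ := ENNReal.rpow_le_rpow key (by norm_num)
    _ = _ := by
      rw [ENNReal.mul_rpow_of_nonneg _ _ (by norm_num), ← ENNReal.rpow_mul]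
      norm_num
end

section
/- Let Ω ⊆ ℝᴺ be an open set with Lebesgue measure and let ω₀, ω₁ : Ω → ℝ be measurable functions with ω₀(x) > 0 and ω₁(x) > 0 for all x ∈ Ω. Let a : Ω → ℂ be measurable and suppose a = b₀ + b₁ for some b₀ ∈ E(ω₀) and b₁ ∈ E(ω₁). Then for every t > 0, the infimum over all decompositions a = a₀ + a₁ with a₀ ∈ E(ω₀), a₁ ∈ E(ω₁) of the quantity ∫_Ω |a₀(x)|² ω₀(x) dx + t² ∫_Ω |a₁(x)|² ω₁(x) dx equals ∫_Ω (t² ω₀(x) ω₁(x) / (ω₀(x) + t² ω₁(x))) |a(x)|² dx. -/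
open MeasureTheory Set
open scoped ENNReal

lemma pw_ineq (w₀ w₁ t : ℝ) (h0 : 0 < w₀) (h1 : 0 < w₁) (ht : 0 < t) (z w : ℂ) :
    t ^ 2 * w₀ * w₁ / (w₀ + t ^ 2 * w₁) * ‖z + w‖ ^ 2
      ≤ ‖z‖ ^ 2 * w₀ + t ^ 2 * (‖w‖ ^ 2 * w₁) := by
  have hn : ‖z + w‖ ^ 2 ≤ (‖z‖ + ‖w‖) ^ 2 := by
    gcongr
    exact norm_add_le z w
  have hp : 0 < w₀ + t ^ 2 * w₁ := by positivity
  calc _ ≤ t ^ 2 * w₀ * w₁ / (w₀ + t ^ 2 * w₁) * (‖z‖ + ‖w‖) ^ 2 := by gcongr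
    _ ≤ _ := by
      rw [div_mul_eq_mul_div, div_le_iff₀ hp]
      nlinarith [sq_nonneg (w₀ * ‖z‖ - t ^ 2 * w₁ * ‖w‖)]

lemma pw_eq (w₀ w₁ t : ℝ) (h0 : 0 < w₀) (h1 : 0 < w₁) (ht : 0 < t) (z : ℂ) :
    ‖((t ^ 2 * w₁ / (w₀ + t ^ 2 * w₁) : ℝ) : ℂ) * z‖ ^ 2 * w₀
      + t ^ 2 * (‖z - ((t ^ 2 * w₁ / (w₀ + t ^ 2 * w₁) : ℝ) : ℂ) * z‖ ^ 2 * w₁)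
      = t ^ 2 * w₀ * w₁ / (w₀ + t ^ 2 * w₁) * ‖z‖ ^ 2 := by
  have hp : 0 < w₀ + t ^ 2 * w₁ := by positivity
  have e : z - ((t ^ 2 * w₁ / (w₀ + t ^ 2 * w₁) : ℝ) : ℂ) * z
      = ((1 - t ^ 2 * w₁ / (w₀ + t ^ 2 * w₁) : ℝ) : ℂ) * z := by
    push_cast
    ring
  rw [e, norm_mul, norm_mul, Complex.norm_real, Complex.norm_real, mul_pow, mul_pow,
    Real.norm_eq_abs, Real.norm_eq_abs, sq_abs, sq_abs]
  field_simp
  ring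

lemma comb {N : ℕ} (Ω : Set (Fin N → ℝ)) (hΩ : IsOpen Ω)
    (ω₀ ω₁ : (Fin N → ℝ) → ℝ) (hω₀m : Measurable ω₀) (hω₁m : Measurable ω₁)
    (hω₀ : ∀ x ∈ Ω, 0 < ω₀ x) (hω₁ : ∀ x ∈ Ω, 0 < ω₁ x)
    (u v : (Fin N → ℝ) → ℂ) (hu : Measurable u) (hv : Measurable v) (t : ℝ) :
    (∫⁻ x in Ω, ENNReal.ofReal (‖u x‖ ^ 2 * ω₀ x))
      + ENNReal.ofReal (t ^ 2) * (∫⁻ x in Ω, ENNReal.ofReal (‖v x‖ ^ 2 * ω₁ x))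
      = ∫⁻ x in Ω, ENNReal.ofReal (‖u x‖ ^ 2 * ω₀ x + t ^ 2 * (‖v x‖ ^ 2 * ω₁ x)) := by
  rw [← lintegral_const_mul _ (by fun_prop), ← lintegral_add_left (by fun_prop)]
  refine setLIntegral_congr_fun hΩ.measurableSet fun x hx => ?_
  have h0 := hω₀ x hx
  have h1 := hω₁ x hx
  rw [← ENNReal.ofReal_mul (by positivity), ← ENNReal.ofReal_add (by positivity) (by positivity)]

theorem K_functional_weighted_L2_formula
    {N : ℕ} (Ω : Set (Fin N → ℝ)) (hΩ : IsOpen Ω)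
    (ω₀ ω₁ : (Fin N → ℝ) → ℝ) (hω₀m : Measurable ω₀) (hω₁m : Measurable ω₁)
    (hω₀ : ∀ x ∈ Ω, 0 < ω₀ x) (hω₁ : ∀ x ∈ Ω, 0 < ω₁ x)
    (a b₀ b₁ : (Fin N → ℝ) → ℂ) (ham : Measurable a)
    (hb₀m : Measurable b₀) (hb₀ : (∫⁻ x in Ω, ENNReal.ofReal (‖b₀ x‖ ^ 2 * ω₀ x)) < ⊤)
    (hb₁m : Measurable b₁) (hb₁ : (∫⁻ x in Ω, ENNReal.ofReal (‖b₁ x‖ ^ 2 * ω₁ x)) < ⊤)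
    (hab : a = b₀ + b₁) (t : ℝ) (ht : 0 < t) :
    sInf {r : ℝ≥0∞ | ∃ a₀ a₁ : (Fin N → ℝ) → ℂ,
        Measurable a₀ ∧ (∫⁻ x in Ω, ENNReal.ofReal (‖a₀ x‖ ^ 2 * ω₀ x)) < ⊤ ∧
        Measurable a₁ ∧ (∫⁻ x in Ω, ENNReal.ofReal (‖a₁ x‖ ^ 2 * ω₁ x)) < ⊤ ∧
        a = a₀ + a₁ ∧
        r = (∫⁻ x in Ω, ENNReal.ofReal (‖a₀ x‖ ^ 2 * ω₀ x))
            + ENNReal.ofReal (t ^ 2) * ∫⁻ x in Ω, ENNReal.ofReal (‖a₁ x‖ ^ 2 * ω₁ x)}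
      = ∫⁻ x in Ω,
          ENNReal.ofReal (t ^ 2 * ω₀ x * ω₁ x / (ω₀ x + t ^ 2 * ω₁ x) * ‖a x‖ ^ 2) := by
  have key : ∀ a₀ a₁ : (Fin N → ℝ) → ℂ, Measurable a₀ → Measurable a₁ → a = a₀ + a₁ →
      (∫⁻ x in Ω,
          ENNReal.ofReal (t ^ 2 * ω₀ x * ω₁ x / (ω₀ x + t ^ 2 * ω₁ x) * ‖a x‖ ^ 2))
      ≤ (∫⁻ x in Ω, ENNReal.ofReal (‖a₀ x‖ ^ 2 * ω₀ x))
            + ENNReal.ofReal (t ^ 2) * ∫⁻ x in Ω, ENNReal.ofReal (‖a₁ x‖ ^ 2 * ω₁ x) := by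
    intro a₀ a₁ h0 h1 h
    rw [comb Ω hΩ ω₀ ω₁ hω₀m hω₁m hω₀ hω₁ a₀ a₁ h0 h1 t]
    refine setLIntegral_mono' hΩ.measurableSet fun x hx => ENNReal.ofReal_le_ofReal ?_
    rw [h]
    exact pw_ineq _ _ t (hω₀ x hx) (hω₁ x hx) ht _ _
  apply le_antisymm
  · have hfin := (key b₀ b₁ hb₀m hb₁m hab).trans_lt
      (ENNReal.add_lt_top.2 ⟨hb₀, ENNReal.mul_lt_top ENNReal.ofReal_lt_top hb₁⟩)
    let a₀ : (Fin N → ℝ) → ℂ := fun x => ((t ^ 2 * ω₁ x / (ω₀ x + t ^ 2 * ω₁ x) : ℝ) : ℂ) * a x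
    let a₁ : (Fin N → ℝ) → ℂ := fun x => a x - a₀ x
    have h0 : Measurable a₀ :=
      (Complex.measurable_ofReal.comp (by fun_prop :
        Measurable fun x => t ^ 2 * ω₁ x / (ω₀ x + t ^ 2 * ω₁ x))).mul ham
    have h1 : Measurable a₁ := ham.sub h0
    have heq := comb Ω hΩ ω₀ ω₁ hω₀m hω₁m hω₀ hω₁ a₀ a₁ h0 h1 t
    rw [setLIntegral_congr_fun hΩ.measurableSet (g := fun x =>
      ENNReal.ofReal (t ^ 2 * ω₀ x * ω₁ x / (ω₀ x + t ^ 2 * ω₁ x) * ‖a x‖ ^ 2))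
      (fun x hx => congrArg ENNReal.ofReal
        (pw_eq _ _ t (hω₀ x hx) (hω₁ x hx) ht (a x)))] at heq
    rw [← heq] at hfin
    obtain ⟨f0, f1⟩ := ENNReal.add_lt_top.1 hfin
    refine sInf_le ⟨a₀, a₁, h0, f0, h1, ?_, ?_, heq.symm⟩
    · refine ENNReal.lt_top_of_mul_ne_top_right f1.ne ?_
      simpa using ht.ne'
    · funext x
      simp [a₁]
  · refine le_sInf ?_
    rintro r ⟨a₀, a₁, h0, -, h1, -, h, rfl⟩
    exact key a₀ a₁ h0 h1 h
end

section
/- Let Ω ⊆ ℝᴺ be an open set with Lebesgue measure, let ω₀, ω₁ : Ω → ℝ be measurable with ω₀(x) > 0 and ω₁(x) > 0 for all x ∈ Ω, let 0 < θ < 1, and set ω_θ = ω₀^{1−θ} ω₁^{θ}. Let a : Ω → ℂ be measurable with a = b₀ + b₁ for some b₀ ∈ E(ω₀), b₁ ∈ E(ω₁), and define K₂(t; a) = inf { (‖a₀‖_{ω₀}² + t² ‖a₁‖_{ω₁}²)^{1/2} : a = a₀ + a₁, a₀ ∈ E(ω₀), a₁ ∈ E(ω₁) }. Then ∫₀^∞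 t^{−2θ} K₂(t; a)² dt/t = C_θ · ∫_Ω |a(x)|² ω_θ(x) dx as extended nonnegative reals, where C_θ = ∫₀^∞ s^{1−2θ}/(1 + s²) ds is a finite positive constant; in particular ∫₀^∞ t^{−2θ} K₂(t; a)² dt/t < ∞ if and only if a ∈ E(ω_θ). -/
open MeasureTheory Set
open scoped ENNReal

/-- The quadratic K-functional for the pair of weighted `L²` spaces `E(ω₀), E(ω₁)` on `Ω`:
`K₂(t; a) = inf { (‖a₀‖_{ω₀}² + t² ‖a₁‖_{ω₁}²)^{1/2} : a = a₀ + a₁, a₀ ∈ E(ω₀), a₁ ∈ E(ω₁) }`,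
as an extended nonnegative real. -/
noncomputable def K2w {N : ℕ} (Ω : Set (Fin N → ℝ)) (ω₀ ω₁ : (Fin N → ℝ) → ℝ) (t : ℝ)
    (a : (Fin N → ℝ) → ℂ) : ℝ≥0∞ :=
  sInf {r : ℝ≥0∞ | ∃ a₀ a₁ : (Fin N → ℝ) → ℂ,
      Measurable a₀ ∧ (∫⁻ x in Ω, ENNReal.ofReal (‖a₀ x‖ ^ 2 * ω₀ x)) < ⊤ ∧
      Measurable a₁ ∧ (∫⁻ x in Ω, ENNReal.ofReal (‖a₁ x‖ ^ 2 * ω₁ x)) < ⊤ ∧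
      a = a₀ + a₁ ∧
      r = ((∫⁻ x in Ω, ENNReal.ofReal (‖a₀ x‖ ^ 2 * ω₀ x))
            + ENNReal.ofReal (t ^ 2) * ∫⁻ x in Ω, ENNReal.ofReal (‖a₁ x‖ ^ 2 * ω₁ x))
          ^ ((1 : ℝ) / 2)}

namespace WL2

lemma const_pos (θ : ℝ) :
    0 < (∫⁻ s in Ioi (0 : ℝ), ENNReal.ofReal (s ^ (1 - 2 * θ) / (1 + s ^ 2))) := by
  rw [setLIntegral_pos_iff (by fun_prop)]
  have h : Ioi (0:ℝ) ⊆ Function.support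
      (fun s : ℝ => ENNReal.ofReal (s ^ (1 - 2 * θ) / (1 + s ^ 2))) ∩ Ioi 0 := by
    intro s hs
    have hs' : (0:ℝ) < s := hs
    refine ⟨?_, hs⟩
    simp only [Function.mem_support, ne_eq, ENNReal.ofReal_eq_zero, not_le]
    positivity
  refine lt_of_lt_of_le ?_ (measure_mono h)
  simp

lemma const_lt_top (θ : ℝ) (hθ₀ : 0 < θ) (hθ₁ : θ < 1) :
    (∫⁻ s in Ioi (0 : ℝ), ENNReal.ofReal (s ^ (1 - 2 * θ) / (1 + s ^ 2))) < ⊤ := by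
  have hu : Ioi (0:ℝ) ⊆ Ioo 0 2 ∪ Ioi 1 := by
    intro s hs
    have hs' : (0:ℝ) < s := hs
    rcases lt_or_ge s 2 with h | h
    · exact Or.inl ⟨hs, h⟩
    · exact Or.inr (show (1:ℝ) < s by linarith)
  refine lt_of_le_of_lt (lintegral_mono_set hu) ?_
  refine lt_of_le_of_lt (lintegral_union_le _ _ _) ?_
  refine ENNReal.add_lt_top.2 ⟨?_, ?_⟩
  · have h1 : IntegrableOn (fun s : ℝ => s ^ (1 - 2 * θ)) (Ioo 0 2) :=
      (intervalIntegral.integrableOn_Ioo_rpow_iff (by norm_num)).2 (by linarith)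
    refine lt_of_le_of_lt ?_ h1.setLIntegral_lt_top
    refine setLIntegral_mono' measurableSet_Ioo fun s hs => ?_
    have hs' : (0:ℝ) < s := hs.1
    refine ENNReal.ofReal_le_ofReal (div_le_self (by positivity) (by nlinarith))
  · have h1 : IntegrableOn (fun s : ℝ => s ^ (-1 - 2 * θ)) (Ioi 1) :=
      integrableOn_Ioi_rpow_of_lt (by linarith) one_pos
    refine lt_of_le_of_lt ?_ h1.setLIntegral_lt_top
    refine setLIntegral_mono' measurableSet_Ioi fun s hs => ?_
    have hs1 : (1:ℝ) < s := hs
    have hs' : (0:ℝ) < s := by linarith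
    refine ENNReal.ofReal_le_ofReal ?_
    rw [div_le_iff₀ (by positivity)]
    have : s ^ (1 - 2 * θ) = s ^ (-1 - 2 * θ) * s ^ 2 := by
      rw [← Real.rpow_natCast, ← Real.rpow_add hs']
      congr 1
      push_cast
      ring
    rw [this]
    have : 0 < s ^ (-1 - 2 * θ) := by positivity
    nlinarith

lemma inner_int (θ A p q : ℝ) (hp : 0 < p) (hq : 0 < q) :
    (∫⁻ t in Ioi (0 : ℝ), ENNReal.ofReal (t ^ (-(2 * θ)) / t) *
        ENNReal.ofReal (A ^ 2 * (p * (t ^ 2 * q) / (p + t ^ 2 * q))))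
      = (∫⁻ s in Ioi (0 : ℝ), ENNReal.ofReal (s ^ (1 - 2 * θ) / (1 + s ^ 2))) *
        ENNReal.ofReal (A ^ 2 * (p ^ (1 - θ) * q ^ θ)) := by
  obtain ⟨r, hr, hrp⟩ : ∃ r : ℝ, 0 < r ∧ p = r ^ 2 * q := by
    refine ⟨Real.sqrt (p / q), by positivity, ?_⟩
    rw [Real.sq_sqrt (by positivity)]
    field_simp
  have him : (fun s : ℝ => r * s) '' Ioi 0 = Ioi 0 := by
    rw [Set.image_mul_left_Ioi hr]
    simp
  have hsub := lintegral_image_eq_lintegral_abs_deriv_mul (s := Ioi (0:ℝ)) (f := fun s : ℝ => r * s)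
    (f' := fun _ => r) measurableSet_Ioi
    (fun x _ => by simpa using ((hasDerivAt_id x).const_mul r).hasDerivWithinAt)
    (fun x _ y _ h => mul_left_cancel₀ hr.ne' h)
    (fun t => ENNReal.ofReal (t ^ (-(2 * θ)) / t) *
        ENNReal.ofReal (A ^ 2 * (p * (t ^ 2 * q) / (p + t ^ 2 * q))))
  rw [him] at hsub
  rw [hsub, ← lintegral_mul_const' _ _ ENNReal.ofReal_ne_top]
  refine setLIntegral_congr_fun measurableSet_Ioi fun s hs => ?_
  have hs' : (0:ℝ) < s := hs
  rw [← ENNReal.ofReal_mul (by positivity), ← ENNReal.ofReal_mul (by positivity),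
    ← ENNReal.ofReal_mul (by positivity), abs_of_pos hr]
  congr 1
  have e1 : (r * s) ^ (-(2 * θ)) = r ^ (-(2 * θ)) * s ^ (-(2 * θ)) :=
    Real.mul_rpow hr.le hs'.le
  have e2 : s ^ (1 - 2 * θ) = s * s ^ (-(2 * θ)) := by
    rw [sub_eq_add_neg, Real.rpow_add hs', Real.rpow_one]
  have e3 : p ^ (1 - θ) * q ^ θ = r ^ 2 * r ^ (-(2 * θ)) * q := by
    rw [hrp, Real.mul_rpow (by positivity) hq.le, mul_assoc, ← Real.rpow_add hq,
      ← Real.rpow_natCast r 2, ← Real.rpow_mul hr.le, ← Real.rpow_add hr]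
    have : 1 - θ + θ = 1 := by ring
    rw [this, Real.rpow_one]
    congr 2
    push_cast
    ring
  rw [e1, e2, e3, hrp]
  have : r ^ 2 * q + (r * s) ^ 2 * q ≠ 0 := by positivity
  field_simp
  try ring

lemma ptwise_le (u v : ℂ) (p c : ℝ) (hp : 0 < p) (hc : 0 < c) :
    ‖u + v‖ ^ 2 * (p * c / (p + c)) ≤ ‖u‖ ^ 2 * p + c * (‖v‖ ^ 2) := by
  have h := norm_add_le u v
  have h2 : ‖u + v‖ ^ 2 ≤ (‖u‖ + ‖v‖) ^ 2 := by gcongr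
  rw [← mul_div_assoc, div_le_iff₀ (by positivity)]
  have : ‖u + v‖ ^ 2 * (p * c) ≤ (‖u‖ + ‖v‖) ^ 2 * (p * c) := by gcongr
  nlinarith [sq_nonneg (p * ‖u‖ - c * ‖v‖)]

lemma K2_eq {N : ℕ} (Ω : Set (Fin N → ℝ)) (hΩ : IsOpen Ω)
    (ω₀ ω₁ : (Fin N → ℝ) → ℝ) (hω₀m : Measurable ω₀) (hω₁m : Measurable ω₁)
    (hω₀ : ∀ x ∈ Ω, 0 < ω₀ x) (hω₁ : ∀ x ∈ Ω, 0 < ω₁ x)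
    (a b₀ b₁ : (Fin N → ℝ) → ℂ) (ham : Measurable a)
    (hb₀m : Measurable b₀) (hb₀ : (∫⁻ x in Ω, ENNReal.ofReal (‖b₀ x‖ ^ 2 * ω₀ x)) < ⊤)
    (hb₁m : Measurable b₁) (hb₁ : (∫⁻ x in Ω, ENNReal.ofReal (‖b₁ x‖ ^ 2 * ω₁ x)) < ⊤)
    (hab : a = b₀ + b₁) (t : ℝ) (ht : 0 < t) :
    K2w Ω ω₀ ω₁ t a = (∫⁻ x in Ω, ENNReal.ofReal
      (‖a x‖ ^ 2 * (ω₀ x * (t ^ 2 * ω₁ x) / (ω₀ x + t ^ 2 * ω₁ x)))) ^ ((1:ℝ) / 2) := by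
  have hcomb : ∀ a₀ a₁ : (Fin N → ℝ) → ℂ, Measurable a₀ → Measurable a₁ →
      (∫⁻ x in Ω, ENNReal.ofReal (‖a₀ x‖ ^ 2 * ω₀ x))
            + ENNReal.ofReal (t ^ 2) * ∫⁻ x in Ω, ENNReal.ofReal (‖a₁ x‖ ^ 2 * ω₁ x)
      = ∫⁻ x in Ω, ENNReal.ofReal (‖a₀ x‖ ^ 2 * ω₀ x + (t ^ 2 * ω₁ x) * ‖a₁ x‖ ^ 2) := by
    intro a₀ a₁ h₀ h₁
    rw [← lintegral_const_mul' _ _ ENNReal.ofReal_ne_top, ← lintegral_add_left (by fun_prop)]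
    refine setLIntegral_congr_fun hΩ.measurableSet fun x hx => ?_
    have := hω₀ x hx
    have := hω₁ x hx
    rw [← ENNReal.ofReal_mul (by positivity), ← ENNReal.ofReal_add (by positivity) (by positivity)]
    congr 1
    ring
  have hlow : ∀ a₀ a₁ : (Fin N → ℝ) → ℂ, Measurable a₀ → Measurable a₁ → a = a₀ + a₁ →
      (∫⁻ x in Ω, ENNReal.ofReal
        (‖a x‖ ^ 2 * (ω₀ x * (t ^ 2 * ω₁ x) / (ω₀ x + t ^ 2 * ω₁ x)))) ≤
      (∫⁻ x in Ω, ENNReal.ofReal (‖a₀ x‖ ^ 2 * ω₀ x))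
            + ENNReal.ofReal (t ^ 2) * ∫⁻ x in Ω, ENNReal.ofReal (‖a₁ x‖ ^ 2 * ω₁ x) := by
    intro a₀ a₁ h₀ h₁ h
    rw [hcomb a₀ a₁ h₀ h₁]
    refine setLIntegral_mono' hΩ.measurableSet fun x hx => ENNReal.ofReal_le_ofReal ?_
    have h1 := hω₀ x hx
    have h2 := hω₁ x hx
    rw [h]
    exact ptwise_le _ _ _ _ h1 (by positivity)
  have hfin : (∫⁻ x in Ω, ENNReal.ofReal
        (‖a x‖ ^ 2 * (ω₀ x * (t ^ 2 * ω₁ x) / (ω₀ x + t ^ 2 * ω₁ x)))) < ⊤ :=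
    lt_of_le_of_lt (hlow b₀ b₁ hb₀m hb₁m hab)
      (ENNReal.add_lt_top.2 ⟨hb₀, ENNReal.mul_lt_top ENNReal.ofReal_lt_top hb₁⟩)
  apply le_antisymm
  · let g : (Fin N → ℝ) → ℝ := fun x => t ^ 2 * ω₁ x / (ω₀ x + t ^ 2 * ω₁ x)
    have hg : Measurable g := by fun_prop
    let a₀ : (Fin N → ℝ) → ℂ := fun x => a x * (g x : ℂ)
    let a₁ : (Fin N → ℝ) → ℂ := fun x => a x * ((1 - g x : ℝ) : ℂ)
    have h₀ : Measurable a₀ := by fun_prop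
    have h₁ : Measurable a₁ := by fun_prop
    have heq : (∫⁻ x in Ω, ENNReal.ofReal (‖a₀ x‖ ^ 2 * ω₀ x))
            + ENNReal.ofReal (t ^ 2) * (∫⁻ x in Ω, ENNReal.ofReal (‖a₁ x‖ ^ 2 * ω₁ x))
        = ∫⁻ x in Ω, ENNReal.ofReal
        (‖a x‖ ^ 2 * (ω₀ x * (t ^ 2 * ω₁ x) / (ω₀ x + t ^ 2 * ω₁ x))) := by
      rw [hcomb a₀ a₁ h₀ h₁]
      refine setLIntegral_congr_fun hΩ.measurableSet fun x hx => ?_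
      have h1 := hω₀ x hx
      have h2 := hω₁ x hx
      have h3 : ω₀ x + t ^ 2 * ω₁ x ≠ 0 := by positivity
      simp only [a₀, a₁, norm_mul, Complex.norm_real, Real.norm_eq_abs, mul_pow, sq_abs, g]
      congr 1
      field_simp
      ring
    rw [← heq] at hfin
    have hf := ENNReal.add_lt_top.1 hfin
    refine sInf_le ⟨a₀, a₁, h₀, hf.1, h₁, ?_, ?_, by rw [heq]⟩
    · refine ENNReal.lt_top_of_mul_ne_top_right hf.2.ne ?_
      simp only [ne_eq, ENNReal.ofReal_eq_zero, not_le]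
      positivity
    · funext x
      simp only [a₀, a₁, Pi.add_apply]
      push_cast
      ring
  · refine le_sInf ?_
    rintro _ ⟨a₀, a₁, h₀, -, h₁, -, h, rfl⟩
    exact ENNReal.rpow_le_rpow (hlow a₀ a₁ h₀ h₁ h) (by norm_num)

end WL2

theorem interpolation_of_weighted_L2
    {N : ℕ} (Ω : Set (Fin N → ℝ)) (hΩ : IsOpen Ω)
    (ω₀ ω₁ : (Fin N → ℝ) → ℝ) (hω₀m : Measurable ω₀) (hω₁m : Measurable ω₁)
    (hω₀ : ∀ x ∈ Ω, 0 < ω₀ x) (hω₁ : ∀ x ∈ Ω, 0 < ω₁ x)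
    (θ : ℝ) (hθ₀ : 0 < θ) (hθ₁ : θ < 1)
    (a b₀ b₁ : (Fin N → ℝ) → ℂ) (ham : Measurable a)
    (hb₀m : Measurable b₀) (hb₀ : (∫⁻ x in Ω, ENNReal.ofReal (‖b₀ x‖ ^ 2 * ω₀ x)) < ⊤)
    (hb₁m : Measurable b₁) (hb₁ : (∫⁻ x in Ω, ENNReal.ofReal (‖b₁ x‖ ^ 2 * ω₁ x)) < ⊤)
    (hab : a = b₀ + b₁) :
    0 < (∫⁻ s in Ioi (0 : ℝ), ENNReal.ofReal (s ^ (1 - 2 * θ) / (1 + s ^ 2))) ∧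
    (∫⁻ s in Ioi (0 : ℝ), ENNReal.ofReal (s ^ (1 - 2 * θ) / (1 + s ^ 2))) < ⊤ ∧
    (∫⁻ t in Ioi (0 : ℝ),
        ENNReal.ofReal (t ^ (-(2 * θ)) / t) * (K2w Ω ω₀ ω₁ t a) ^ (2 : ℝ))
      = (∫⁻ s in Ioi (0 : ℝ), ENNReal.ofReal (s ^ (1 - 2 * θ) / (1 + s ^ 2))) *
          ∫⁻ x in Ω, ENNReal.ofReal (‖a x‖ ^ 2 * (ω₀ x ^ (1 - θ) * ω₁ x ^ θ)) ∧
    ((∫⁻ t in Ioi (0 : ℝ),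
        ENNReal.ofReal (t ^ (-(2 * θ)) / t) * (K2w Ω ω₀ ω₁ t a) ^ (2 : ℝ)) < ⊤
      ↔ (∫⁻ x in Ω, ENNReal.ofReal (‖a x‖ ^ 2 * (ω₀ x ^ (1 - θ) * ω₁ x ^ θ))) < ⊤) := by
  have hpos := WL2.const_pos θ
  have hlt := WL2.const_lt_top θ hθ₀ hθ₁
  have key : (∫⁻ t in Ioi (0 : ℝ),
        ENNReal.ofReal (t ^ (-(2 * θ)) / t) * (K2w Ω ω₀ ω₁ t a) ^ (2 : ℝ))
      = (∫⁻ s in Ioi (0 : ℝ), ENNReal.ofReal (s ^ (1 - 2 * θ) / (1 + s ^ 2))) *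
          ∫⁻ x in Ω, ENNReal.ofReal (‖a x‖ ^ 2 * (ω₀ x ^ (1 - θ) * ω₁ x ^ θ)) := by
    calc _ = ∫⁻ t in Ioi (0 : ℝ), ∫⁻ x in Ω, ENNReal.ofReal (t ^ (-(2 * θ)) / t) *
              ENNReal.ofReal
                (‖a x‖ ^ 2 * (ω₀ x * (t ^ 2 * ω₁ x) / (ω₀ x + t ^ 2 * ω₁ x))) := by
          refine setLIntegral_congr_fun measurableSet_Ioi fun t ht => ?_
          rw [WL2.K2_eq Ω hΩ ω₀ ω₁ hω₀m hω₁m hω₀ hω₁ a b₀ b₁ ham hb₀m hb₀ hb₁m hb₁ hab t ht,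
            ← ENNReal.rpow_mul, lintegral_const_mul' _ _ ENNReal.ofReal_ne_top]
          norm_num
      _ = ∫⁻ x in Ω, ∫⁻ t in Ioi (0 : ℝ), ENNReal.ofReal (t ^ (-(2 * θ)) / t) *
              ENNReal.ofReal
                (‖a x‖ ^ 2 * (ω₀ x * (t ^ 2 * ω₁ x) / (ω₀ x + t ^ 2 * ω₁ x))) := by
          refine lintegral_lintegral_swap (Measurable.aemeasurable ?_)
          unfold Function.uncurry
          fun_prop
      _ = _ := by
          rw [← lintegral_const_mul' _ _ hlt.ne]
          refine setLIntegral_congr_fun hΩ.measurableSet fun x hx => ?_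
          exact WL2.inner_int θ ‖a x‖ (ω₀ x) (ω₁ x) (hω₀ x hx) (hω₁ x hx)
  refine ⟨hpos, hlt, key, ?_⟩
  rw [key]
  exact ⟨fun h => ENNReal.lt_top_of_mul_ne_top_right h.ne hpos.ne',
    fun h => ENNReal.mul_lt_top hlt h⟩
end
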